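/- arXiv:2312.11390 — 3 statements merged into one kernel-verified Lean document; each statement's English description precedes it below -/
import Mathlib

section
/- Let B=(V,A,τ) be a temporal graph and r∈V. Then B is a temporal out-branching (TOB) with root r if and only if: for every v∈V\{r} there exists a temporal (r,v)-walk in B, the in-degree of r in B is 0, and the in-degree of every v∈V\{r} in B is 1 (the in-degree of v being the number of temporal arcs of B with head v). -/
open scoped Classical

universe u

/-- A temporal arc `(u, v, s, t)`: tail `u`, head `v`, starting time `s`, arrival time `t`. -/
abbrev TArc (α : Type u) := α × α × ℕ × ℕ

/-- The tail vertex of a temporal arc. -/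
def TArc.tail {α : Type u} (a : TArc α) : α := a.1

/-- The head vertex of a temporal arc. -/
def TArc.head {α : Type u} (a : TArc α) : α := a.2.1

/-- The starting time of a temporal arc. -/
def TArc.ts {α : Type u} (a : TArc α) : ℕ := a.2.2.1

/-- The arrival time of a temporal arc. -/
def TArc.ta {α : Type u} (a : TArc α) : ℕ := a.2.2.2

/-- The elapsed time of a temporal arc. -/
def TArc.el {α : Type u} (a : TArc α) : ℕ := TArc.ta a - TArc.ts a

/-- A temporal graph `(V, A, τ)`. -/
structure TempGraph (α : Type u) where
  V : Finset α
  A : Finset (TArc α)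
  τ : ℕ
  nonempty : V.Nonempty
  valid : ∀ a ∈ A, TArc.tail a ∈ V ∧ TArc.head a ∈ V ∧ TArc.tail a ≠ TArc.head a ∧
      1 ≤ TArc.ts a ∧ TArc.ts a ≤ TArc.ta a ∧ TArc.ta a ≤ τ

variable {α : Type u}

/-- `IsWalk S u v L` : `L` is the list of arcs of a temporal `(u,v)`-walk using arcs from `S`
(the trivial walk, `L = []`, requires `u = v`). -/
def IsWalk (S : Finset (TArc α)) : α → α → List (TArc α) → Prop
  | u, v, [] => u = v
  | u, v, a :: L => a ∈ S ∧ TArc.tail a = u ∧ (∀ b ∈ L.head?, TArc.ta a ≤ TArc.ts b) ∧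
      IsWalk S (TArc.head a) v L

/-- The starting time of a walk (`0` for the trivial walk). -/
def tsW (L : List (TArc α)) : ℕ := (L.map TArc.ts).headI

/-- The arrival time of a walk (`0` for the trivial walk). -/
def taW (L : List (TArc α)) : ℕ := (L.map TArc.ta).getLastD 0

/-- The duration of a walk. -/
def durW (L : List (TArc α)) : ℕ := taW L - tsW L

/-- The travelling time of a walk. -/
def ttW (L : List (TArc α)) : ℕ := (L.map TArc.el).sum

/-- The waiting time of a walk. -/
def waitW (L : List (TArc α)) : ℕ :=
  (List.zipWith (fun a b => TArc.ts b - TArc.ta a) L L.tail).sum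

/-- The final vertex of a walk starting at `u` with arc list `L`. -/
def endv (u : α) (L : List (TArc α)) : α := (L.map TArc.head).getLastD u

/-- The sequence of vertices of a walk starting at `u` with arc list `L`. -/
def verts (u : α) (L : List (TArc α)) : List α := u :: L.map TArc.head

/-- A walk is a (temporal) path when its vertices are pairwise distinct. -/
def IsPathList (u : α) (L : List (TArc α)) : Prop := (verts u L).Nodup

/-- The six optimisation criteria: earliest arrival, fastest time, latest departure,
minimum transfers, minimum waiting time, shortest travelling time. -/
inductive DistKind : Type
  | EA | FT | LD | MT | MW | ST
  deriving DecidableEq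

/-- The value of a walk for each criterion. -/
def wval : DistKind → List (TArc α) → ℕ
  | .EA, L => taW L
  | .FT, L => durW L
  | .LD, L => tsW L
  | .MT, L => L.length
  | .MW, L => waitW L
  | .ST, L => ttW L

/-- `Realizes d S u v L` : `L` is a temporal `(u,v)`-walk within `S` attaining the optimum
(minimum, or maximum for `LD`) of the criterion `d` among all temporal `(u,v)`-walks in `S`. -/
def Realizes (d : DistKind) (S : Finset (TArc α)) (u v : α) (L : List (TArc α)) : Prop :=
  IsWalk S u v L ∧ ∀ L', IsWalk S u v L' →
    if d = DistKind.LD then wval d L' ≤ wval d L else wval d L ≤ wval d L'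

/-- The distance value `d_G(u,v) ∈ ℕ∞` (`+∞` when `v` is not temporally reachable from `u`;
`LD_G(u,u) = τ + 1`). -/
noncomputable def distVal (d : DistKind) (G : TempGraph α) (u v : α) : ℕ∞ :=
  if d = DistKind.LD then
    (if u = v then ((G.τ : ℕ∞) + 1)
     else if ∃ L, IsWalk G.A u v L then
       sSup {n : ℕ∞ | ∃ L, IsWalk G.A u v L ∧ n = (tsW L : ℕ∞)}
     else ⊤)
  else sInf {n : ℕ∞ | ∃ L, IsWalk G.A u v L ∧ n = (wval d L : ℕ∞)}

/-- Every vertex of `Vs` is temporally reachable from `r` using arcs from `S`. -/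
def ReachAll (S : Finset (TArc α)) (Vs : Finset α) (r : α) : Prop :=
  ∀ v ∈ Vs, ∃ L, IsWalk S r v L

/-- `B` is a temporal out-branching (TOB) with root `r`: its arc set is a minimal set of
temporal arcs such that every vertex of `B` is temporally reachable from `r`. -/
def IsTOB (B : TempGraph α) (r : α) : Prop :=
  r ∈ B.V ∧ ReachAll B.A B.V r ∧ ∀ S ⊂ B.A, ¬ ReachAll S B.V r

/-- `B` is a temporal subgraph of `G`. -/
def IsSubgraph (B G : TempGraph α) : Prop :=
  B.V ⊆ G.V ∧ B.A ⊆ G.A ∧ B.τ ≤ G.τ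

/-- `B` is a `d`-TOB of `G` rooted at `r`. -/
def IsDTOB (d : DistKind) (G B : TempGraph α) (r : α) : Prop :=
  IsTOB B r ∧ IsSubgraph B G ∧ ∀ v ∈ B.V, distVal d B r v = distVal d G r v

/-- `B` is a spanning `d`-TOB of `G` rooted at `r`. -/
def IsSpanningDTOB (d : DistKind) (G B : TempGraph α) (r : α) : Prop :=
  IsDTOB d G B r ∧ B.V = G.V

/-- `B` is a maximum `d`-TOB of `G` rooted at `r`. -/
def IsMaxDTOB (d : DistKind) (G B : TempGraph α) (r : α) : Prop :=
  IsDTOB d G B r ∧ ∀ B', IsDTOB d G B' r → B'.V.card ≤ B.V.card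

/-- The in-degree of `v` with respect to the arc set `S`. -/
noncomputable def inDeg (S : Finset (TArc α)) (v : α) : ℕ :=
  (S.filter fun a => TArc.head a = v).card

/-- A walk in a (static) digraph with arc set `E`. -/
def IsDWalk (E : Finset (α × α)) : α → α → List (α × α) → Prop
  | u, v, [] => u = v
  | u, v, e :: L => e ∈ E ∧ e.1 = u ∧ IsDWalk E e.2 v L

/-- The digraph `(Vs, E)` is an out-branching with root `r`: every `v ∈ Vs` is the end of
a unique `(r,v)`-walk. -/
def IsOutBranching (Vs : Finset α) (E : Finset (α × α)) (r : α) : Prop :=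
  ∀ v ∈ Vs, ∃! L, IsDWalk E r v L

/-- The arc of the underlying multidigraph corresponding to a temporal arc. -/
def proj (a : TArc α) : α × α := (TArc.tail a, TArc.head a)

/-- The temporal subgraph of `G` induced by a set of vertices `Z`. -/
noncomputable def induced (G : TempGraph α) (Z : Finset α) (hne : Z.Nonempty) (hZ : Z ⊆ G.V) :
    TempGraph α where
  V := Z
  A := G.A.filter fun a => TArc.tail a ∈ Z ∧ TArc.head a ∈ Z
  τ := G.τ
  nonempty := hne
  valid := by
    intro a ha
    simp only [Finset.mem_filter] at ha
    obtain ⟨haA, h1, h2⟩ := ha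
    obtain ⟨-, -, h3, h4, h5, h6⟩ := G.valid a haA
    exact ⟨h1, h2, h3, h4, h5, h6⟩

/-- The reverse of a temporal arc with respect to lifetime `τ`. -/
def TArc.rev (τ : ℕ) (a : TArc α) : TArc α :=
  (TArc.head a, TArc.tail a, τ + 1 - TArc.ta a, τ + 1 - TArc.ts a)

/-- The reverse of a temporal graph. -/
noncomputable def TempGraph.rev (G : TempGraph α) : TempGraph α where
  V := G.V
  A := G.A.image (TArc.rev G.τ)
  τ := G.τ
  nonempty := G.nonempty
  valid := by
    intro b hb
    simp only [Finset.mem_image] at hb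
    obtain ⟨a, ha, rfl⟩ := hb
    obtain ⟨h1, h2, h3, h4, h5, h6⟩ := G.valid a ha
    refine ⟨h2, h1, Ne.symm h3, ?_, ?_, ?_⟩ <;>
      simp only [TArc.rev, TArc.tail, TArc.head, TArc.ts, TArc.ta] at * <;> omega

/-- The reverse of a temporal walk. -/
def revWalk (τ : ℕ) (L : List (TArc α)) : List (TArc α) := (L.map (TArc.rev τ)).reverse

/-- Every vertex of `Vs` temporally reaches `r` using arcs from `S`. -/
def CoReachAll (S : Finset (TArc α)) (Vs : Finset α) (r : α) : Prop :=
  ∀ v ∈ Vs, ∃ L, IsWalk S v r L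

/-- `B` is a temporal in-branching (TIB) with root `r`. -/
def IsTIB (B : TempGraph α) (r : α) : Prop :=
  r ∈ B.V ∧ CoReachAll B.A B.V r ∧ ∀ S ⊂ B.A, ¬ CoReachAll S B.V r

/-- `B` is a `d`-TIB of `G` rooted at `r`. -/
def IsDTIB (d : DistKind) (G B : TempGraph α) (r : α) : Prop :=
  IsTIB B r ∧ IsSubgraph B G ∧ ∀ v ∈ B.V, distVal d B v r = distVal d G v r

/-- `B` is a maximum `d`-TIB of `G` rooted at `r`. -/
def IsMaxDTIB (d : DistKind) (G B : TempGraph α) (r : α) : Prop :=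
  IsDTIB d G B r ∧ ∀ B', IsDTIB d G B' r → B'.V.card ≤ B.V.card

/-- The reverse of a temporal subgraph, with respect to the ambient lifetime `τ`. -/
noncomputable def revSub (τ : ℕ) (B : TempGraph α) (h : B.τ ≤ τ) : TempGraph α where
  V := B.V
  A := B.A.image (TArc.rev τ)
  τ := τ
  nonempty := B.nonempty
  valid := by
    intro b hb
    simp only [Finset.mem_image] at hb
    obtain ⟨a, ha, rfl⟩ := hb
    obtain ⟨h1, h2, h3, h4, h5, h6⟩ := B.valid a ha
    refine ⟨h2, h1, Ne.symm h3, ?_, ?_, ?_⟩ <;>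
      simp only [TArc.rev, TArc.tail, TArc.head, TArc.ts, TArc.ta] at * <;> omega

/-- `L` (a walk from `u`) is `d`-prefix-optimal: every prefix of it realizes the distance `d`
from `u` to the end vertex of the prefix. -/
def PrefixOptimal (d : DistKind) (S : Finset (TArc α)) (u : α) (L : List (TArc α)) : Prop :=
  ∀ h ≤ L.length, Realizes d S u (endv u (L.take h)) (L.take h)

/-- `EAd_G(u,v)`: the minimum arrival time among the walks realizing `d_G(u,v)`. -/
noncomputable def eaVal (d : DistKind) (G : TempGraph α) (u v : α) : ℕ∞ :=
  sInf {n : ℕ∞ | ∃ L, Realizes d G.A u v L ∧ n = (taW L : ℕ∞)}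

/-- `G'` is a `d`-temporal out-spanning subgraph (d-TOSS) with root `r` of `G`. -/
def IsDTOSS (d : DistKind) (G G' : TempGraph α) (r : α) : Prop :=
  IsSubgraph G' G ∧ G'.V = G.V ∧
    ∀ v ∈ G.V, ∃ L, IsWalk G'.A r v L ∧ Realizes d G.A r v L

/-- Satisfiability of a CNF formula given by the positive/negative occurrence sets
of its clauses. -/
def Satisfiable (n m : ℕ) (pos neg : Fin m → Finset (Fin n)) : Prop :=
  ∃ σ : Fin n → Bool, ∀ j : Fin m, (∃ i ∈ pos j, σ i = true) ∨ ∃ i ∈ neg j, σ i = false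

/-!
Let `B` be minimal. Cut each walk at its first entry into a vertex `v ≠ r`: the part before it uses
no arc into `v`. Among the arcs that can serve as a first entry, let `a` be one of earliest arrival.
Discarding every other arc into `v` keeps `v` reachable by each time at which it was reachable
before, so every walk continuing through `v` can be rerouted; by minimality nothing was discarded,
and `a` is the only arc into `v`. At the root the trivial walk plays the part of `a`, so all arcs
into `r` can be discarded. Conversely, if the in-degrees are as stated, each arc is the only one
into its head, which is not the root, so it cannot be removed.
-/

section Reachability

variable {A S T : Finset (TArc α)} {L : List (TArc α)} {a : TArc α} {r u v w : α} {t : ℕ}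

theorem taW_append_singleton : taW (L ++ [a]) = TArc.ta a := by
  simp [taW]

theorem isWalk_append_singleton :
    IsWalk S u v (L ++ [a]) ↔
      IsWalk S u (TArc.tail a) L ∧ taW L ≤ TArc.ts a ∧ a ∈ S ∧ TArc.head a = v := by
  induction L generalizing u with
  | nil =>
    simp only [List.nil_append, IsWalk, taW, List.head?_nil, List.map_nil, List.getLastD_nil]
    grind
  | cons c L ih =>
    cases L with
    | nil =>
      simp only [List.cons_append, List.nil_append, IsWalk, taW, List.head?_cons, List.head?_nil,
        List.map_cons, List.map_nil, List.getLastD_cons, List.getLastD_nil]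
      grind
    | cons d L =>
      have taW_cons : taW (c :: d :: L) = taW (d :: L) := by simp [taW]
      rw [taW_cons, List.cons_append, IsWalk, ih]
      simp only [IsWalk, List.cons_append, List.head?_cons, and_assoc]

/-- `ReachableBy S r v t`: some temporal walk from `r` to `v` with arcs in `S` arrives no later than
time `t`; the trivial walk arrives by every time. Walks grow at their last arc, in contrast to
`IsWalk`, so that induction follows the walk away from `r`. -/
inductive ReachableBy (S : Finset (TArc α)) (r : α) : α → ℕ → Prop
  | refl (t : ℕ) : ReachableBy S r r t
  | snoc {a : TArc α} {t : ℕ} (h : ReachableBy S r (TArc.tail a) (TArc.ts a)) (ha : a ∈ S)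
      (hat : TArc.ta a ≤ t) : ReachableBy S r (TArc.head a) t

theorem reachableBy_iff_exists_isWalk :
    ReachableBy S r v t ↔ ∃ L, IsWalk S r v L ∧ taW L ≤ t := by
  constructor
  · intro h
    induction h with
    | refl t => exact ⟨[], rfl, Nat.zero_le t⟩
    | @snoc a t _ ha hat ih =>
      obtain ⟨L, hL, hLa⟩ := ih
      exact ⟨L ++ [a], isWalk_append_singleton.2 ⟨hL, hLa, ha, rfl⟩,
        taW_append_singleton.trans_le hat⟩
  · rintro ⟨L, hL, hLt⟩
    induction L using List.reverseRecOn generalizing v t with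
    | nil =>
      obtain rfl : r = v := hL
      exact .refl t
    | append_singleton L a ih =>
      obtain ⟨hwalk, hLa, ha, rfl⟩ := isWalk_append_singleton.1 hL
      exact .snoc (ih hwalk hLa) ha (taW_append_singleton.symm.trans_le hLt)

theorem exists_isWalk_iff_exists_reachableBy :
    (∃ L, IsWalk S r v L) ↔ ∃ t, ReachableBy S r v t := by
  simp only [reachableBy_iff_exists_isWalk]
  exact ⟨fun ⟨L, hL⟩ => ⟨taW L, L, hL, le_rfl⟩, fun ⟨_, L, hL, _⟩ => ⟨L, hL⟩⟩

theorem ReachableBy.mono (hST : S ⊆ T) (h : ReachableBy S r v t) : ReachableBy T r v t := by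
  induction h with
  | refl t => exact .refl t
  | snoc _ ha hat ih => exact .snoc ih (hST ha) hat

theorem ReachableBy.exists_mem_head_eq (h : ReachableBy S r v t) (hv : v ≠ r) :
    ∃ a ∈ S, TArc.head a = v := by
  cases h with
  | refl => exact absurd rfl hv
  | @snoc a _ _ ha _ => exact ⟨a, ha, rfl⟩

theorem ReachableBy.of_forall_head_ne_mem (hS : ∀ c ∈ A, TArc.head c ≠ v → c ∈ S)
    (hv : ∀ t, ReachableBy A r v t → ReachableBy S r v t) (h : ReachableBy A r w t) :
    ReachableBy S r w t := by
  induction h with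
  | refl t => exact .refl t
  | @snoc c t h hc hct ih =>
    by_cases hcv : TArc.head c = v
    · subst hcv
      exact hv t (.snoc h hc hct)
    · exact .snoc ih (hS c hc hcv) hct

/-- The arcs of `A` by which a temporal walk from `r` can enter `v` for the first time: their tail
is reachable from `r`, by their starting time, along arcs that do not enter `v`. -/
noncomputable def firstEntries (A : Finset (TArc α)) (r v : α) : Finset (TArc α) :=
  {a ∈ A | TArc.head a = v ∧
    ReachableBy {c ∈ A | TArc.head c ≠ v} r (TArc.tail a) (TArc.ts a)}

theorem ReachableBy.avoids_or_exists_firstEntry_le (hA : ∀ c ∈ A, TArc.ts c ≤ TArc.ta c)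
    (h : ReachableBy A r w t) :
    ReachableBy {c ∈ A | TArc.head c ≠ v} r w t ∨ ∃ a ∈ firstEntries A r v, TArc.ta a ≤ t := by
  induction h with
  | refl t => exact .inl (.refl t)
  | @snoc c t _ hc hct ih =>
    obtain havoid | ⟨a, ha, hac⟩ := ih
    · by_cases hcv : TArc.head c = v
      · exact .inr ⟨c, Finset.mem_filter.2 ⟨hc, hcv, havoid⟩, hct⟩
      · exact .inl (.snoc havoid (Finset.mem_filter.2 ⟨hc, hcv⟩) hct)
    · exact .inr ⟨a, ha, hac.trans ((hA c hc).trans hct)⟩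

theorem ReachableBy.exists_firstEntry_le (hA : ∀ c ∈ A, TArc.ts c ≤ TArc.ta c) (hv : v ≠ r)
    (h : ReachableBy A r v t) : ∃ a ∈ firstEntries A r v, TArc.ta a ≤ t := by
  refine (h.avoids_or_exists_firstEntry_le hA).resolve_left fun havoid => ?_
  obtain ⟨a, ha, hav⟩ := havoid.exists_mem_head_eq hv
  exact (Finset.mem_filter.1 ha).2 hav

theorem exists_arc_forall_reachableBy_filter (hA : ∀ c ∈ A, TArc.ts c ≤ TArc.ta c) (hv : v ≠ r)
    (h : ∃ t, ReachableBy A r v t) :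
    ∃ a ∈ A, TArc.head a = v ∧
      ∀ t, ReachableBy A r v t → ReachableBy {c ∈ A | TArc.head c = v → c = a} r v t := by
  obtain ⟨t₀, h₀⟩ := h
  obtain ⟨a₀, ha₀, -⟩ := h₀.exists_firstEntry_le hA hv
  obtain ⟨a, ha, hmin⟩ := (firstEntries A r v).exists_min_image TArc.ta ⟨a₀, ha₀⟩
  obtain ⟨haA, rfl, htail⟩ := Finset.mem_filter.1 ha
  refine ⟨a, haA, rfl, fun t ht => ?_⟩
  obtain ⟨b, hb, hbt⟩ := ht.exists_firstEntry_le hA hv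
  have hsub : {c ∈ A | TArc.head c ≠ TArc.head a} ⊆
      {c ∈ A | TArc.head c = TArc.head a → c = a} :=
    Finset.monotone_filter_right A fun _ _ hne heq => absurd heq hne
  exact .snoc (htail.mono hsub) (Finset.mem_filter.2 ⟨haA, fun _ => rfl⟩) ((hmin b hb).trans hbt)

end Reachability

section Branching

variable {A S : Finset (TArc α)} {Vs : Finset α} {B : TempGraph α} {r v : α}

theorem inDeg_eq_zero_iff : inDeg S v = 0 ↔ ∀ a ∈ S, TArc.head a ≠ v := by
  rw [inDeg, Finset.card_eq_zero, Finset.filter_eq_empty_iff]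

theorem inDeg_le_one_iff :
    inDeg S v ≤ 1 ↔ ∀ a ∈ S, ∀ b ∈ S, TArc.head a = v → TArc.head b = v → a = b := by
  simp only [inDeg, Finset.card_le_one, Finset.mem_filter]
  grind

theorem inDeg_eq_one_iff : inDeg S v = 1 ↔ ∃! a, a ∈ S ∧ TArc.head a = v := by
  simp only [inDeg, Finset.card_eq_one_iff_existsUnique, Finset.mem_filter]

theorem IsTOB.eq_of_reachableBy (hB : IsTOB B r) (hSB : S ⊆ B.A)
    (hS : ∀ c ∈ B.A, TArc.head c ≠ v → c ∈ S)
    (hv : ∀ t, ReachableBy B.A r v t → ReachableBy S r v t) : S = B.A := by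
  by_contra hne
  refine hB.2.2 S (hSB.ssubset_of_ne hne) fun w hw => ?_
  obtain ⟨t, ht⟩ := exists_isWalk_iff_exists_reachableBy.1 (hB.2.1 w hw)
  exact exists_isWalk_iff_exists_reachableBy.2 ⟨t, ht.of_forall_head_ne_mem hS hv⟩

theorem IsTOB.inDeg_root (hB : IsTOB B r) : inDeg B.A r = 0 := by
  have hA : {c ∈ B.A | TArc.head c ≠ r} = B.A :=
    hB.eq_of_reachableBy (Finset.filter_subset _ _)
      (fun c hc hcr => Finset.mem_filter.2 ⟨hc, hcr⟩) fun t _ => .refl t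
  exact inDeg_eq_zero_iff.2 (Finset.filter_eq_self.1 hA)

theorem IsTOB.inDeg_of_ne_root (hB : IsTOB B r) (hvB : v ∈ B.V) (hv : v ≠ r) :
    inDeg B.A v = 1 := by
  have htime : ∀ c ∈ B.A, TArc.ts c ≤ TArc.ta c := fun c hc => (B.valid c hc).2.2.2.2.1
  obtain ⟨a, ha, hav, hreach⟩ := exists_arc_forall_reachableBy_filter htime hv
    (exists_isWalk_iff_exists_reachableBy.1 (hB.2.1 v hvB))
  have hA : {c ∈ B.A | TArc.head c = v → c = a} = B.A :=
    hB.eq_of_reachableBy (Finset.filter_subset _ _)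
      (fun c hc hcv => Finset.mem_filter.2 ⟨hc, fun h => absurd h hcv⟩) hreach
  exact inDeg_eq_one_iff.2 ⟨a, ⟨ha, hav⟩, fun c hc => Finset.filter_eq_self.1 hA c hc.1 hc.2⟩

theorem ReachAll.eq_of_subset (hS : ReachAll S Vs r) (hSA : S ⊆ A)
    (hhead : ∀ a ∈ A, TArc.head a ∈ Vs) (hroot : inDeg A r = 0)
    (hdeg : ∀ v ∈ Vs, v ≠ r → inDeg A v ≤ 1) : S = A := by
  refine hSA.antisymm fun a ha => ?_
  have har : TArc.head a ≠ r := inDeg_eq_zero_iff.1 hroot a ha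
  obtain ⟨t, ht⟩ := exists_isWalk_iff_exists_reachableBy.1 (hS _ (hhead a ha))
  obtain ⟨b, hb, hba⟩ := ht.exists_mem_head_eq har
  obtain rfl : b = a :=
    inDeg_le_one_iff.1 (hdeg _ (hhead a ha) har) b (hSA hb) a ha hba rfl
  exact hb

theorem reachAll_iff_forall_ne :
    ReachAll S Vs r ↔ ∀ v ∈ Vs, v ≠ r → ∃ L, IsWalk S r v L := by
  refine ⟨fun h v hv _ => h v hv, fun h v hv => ?_⟩
  obtain rfl | hvr := eq_or_ne v r
  · exact ⟨[], rfl⟩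
  · exact h v hv hvr

end Branching

/-- Lemma `lem:tob`, 1 ⟺ 2: a temporal graph `B` with `r ∈ V` is a TOB with
root `r` iff every `v ∈ V \ {r}` is temporally reachable from `r` in `B`, the in-degree of `r`
is `0` and the in-degree of every `v ∈ V \ {r}` is `1`. -/
theorem stmt_0 {α : Type u} (B : TempGraph α) (r : α) (hr : r ∈ B.V) :
    IsTOB B r ↔
      ((∀ v ∈ B.V, v ≠ r → ∃ L, IsWalk B.A r v L) ∧
        inDeg B.A r = 0 ∧ ∀ v ∈ B.V, v ≠ r → inDeg B.A v = 1) := by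
  constructor
  · intro hB
    exact ⟨reachAll_iff_forall_ne.1 hB.2.1, hB.inDeg_root, fun _ => hB.inDeg_of_ne_root⟩
  · rintro ⟨hreach, hroot, hdeg⟩
    refine ⟨hr, reachAll_iff_forall_ne.2 hreach, fun S hSB hS => hSB.ne ?_⟩
    exact hS.eq_of_subset hSB.subset (fun a ha => (B.valid a ha).2.1) hroot
      fun v hv hvr => (hdeg v hv hvr).le
end

section
/- Let G=(V,A,τ) be a temporal graph, r,u∈V, and d∈{MT,ST,LD}. Let W be a d-prefix-optimal temporal (r,u)-walk in G, let v∈V(W), let S be a v-suffix of W, and let W_v be a d-prefix-optimal temporal (r,v)-walk in G. If t_a(W_v) ≤ t_s(S), then the concatenation W_v+S is a d-prefix-optimal temporal (r,u)-walk in G. -/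
open scoped Classical

universe u

variable {α : Type u}

/-!
Cut `W` at `v` into `P ++ X`. The walks `P` and `W_v` realize the same distance, so they have equal
values, and for the criteria in question equal values stay equal when the same arcs are appended.
Hence for every prefix `Y` of `X` the walk `W_v ++ Y` has the value of `P ++ Y`, which is optimal
because `P ++ Y` is a prefix of `W`. The prefixes of `W_v` itself are optimal by assumption.

The criteria `FT` and `MW` are excluded because the values of `P ++ Y` there depend on the arrival
or starting time of `P`, which its own value does not determine.
-/

section

variable {S : Finset (TArc α)} {d : DistKind} {u v w : α} {P Q X Y L : List (TArc α)}

theorem endv_cons (u : α) (a : TArc α) (L : List (TArc α)) :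
    endv u (a :: L) = endv a.head L := by
  rw [endv, endv, List.map_cons, List.getLastD_cons]

theorem endv_append (u : α) (P X : List (TArc α)) : endv u (P ++ X) = endv (endv u P) X := by
  induction P generalizing u with
  | nil => rfl
  | cons a P ih => rw [List.cons_append, endv_cons, endv_cons, ih]

theorem taW_append_of_ne_nil (P : List (TArc α)) (hX : X ≠ []) : taW (P ++ X) = taW X := by
  simp [taW, List.getLastD_eq_getLast?, List.getLast?_append, List.getLast?_eq_some_getLast hX]

theorem tsW_append_of_ne_nil (hP : P ≠ []) (X : List (TArc α)) : tsW (P ++ X) = tsW P := by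
  obtain ⟨a, P, rfl⟩ := List.exists_cons_of_ne_nil hP
  rfl

theorem tsW_eq_of_prefix (hYX : Y <+: X) (hY : Y ≠ []) : tsW Y = tsW X := by
  obtain ⟨Z, rfl⟩ := hYX
  exact (tsW_append_of_ne_nil hY Z).symm

theorem isWalk_cons_iff {a : TArc α} :
    IsWalk S u v (a :: L) ↔
      a ∈ S ∧ a.tail = u ∧ (L ≠ [] → a.ta ≤ tsW L) ∧ IsWalk S a.head v L := by
  cases L <;> simp [IsWalk, tsW]

theorem IsWalk.endv_eq (hL : IsWalk S u v L) : endv u L = v := by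
  induction L generalizing u with
  | nil => exact hL
  | cons a L ih => rw [endv_cons, ih (isWalk_cons_iff.1 hL).2.2.2]

theorem isWalk_append_iff :
    IsWalk S u w (P ++ X) ↔
      IsWalk S u (endv u P) P ∧ IsWalk S (endv u P) w X ∧ (X ≠ [] → taW P ≤ tsW X) := by
  induction P generalizing u with
  | nil => simp [IsWalk, endv, taW]
  | cons a P ih =>
    rw [List.cons_append, isWalk_cons_iff, isWalk_cons_iff, endv_cons, ih]
    rcases eq_or_ne P [] with rfl | hP
    · simp only [List.nil_append, endv, IsWalk, taW, List.map_nil, List.map_cons,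
        List.getLastD_nil, List.getLastD_cons]
      grind
    · have hPX : P ++ X ≠ [] := List.append_ne_nil_of_left_ne_nil hP X
      rw [tsW_append_of_ne_nil hP, ← List.singleton_append, taW_append_of_ne_nil [a] hP]
      simp only [ne_eq, hP, hPX, not_false_eq_true, true_imp_iff, and_assoc]

theorem IsWalk.append (hP : IsWalk S u v P) (hX : IsWalk S v w X)
    (hPX : X ≠ [] → taW P ≤ tsW X) : IsWalk S u w (P ++ X) := by
  obtain rfl := hP.endv_eq
  exact isWalk_append_iff.2 ⟨hP, hX, hPX⟩

theorem IsWalk.tsW_eq_zero_iff (hS : ∀ a ∈ S, 0 < a.ts) (hL : IsWalk S u v L) :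
    tsW L = 0 ↔ L = [] := by
  cases L with
  | nil => simp [tsW]
  | cons a L => simpa [tsW] using (hS a hL.1).ne'

/-- The criterion `d` is append-compatible on `S`: two walks in `S` with the same ends and the same
`d`-value keep equal values when the same arcs are appended. This is what allows an optimal prefix
of a walk to be exchanged for another one. The appended list is not required to be a walk. -/
def AppendCompatible (d : DistKind) (S : Finset (TArc α)) : Prop :=
  ∀ ⦃u v : α⦄ ⦃P Q : List (TArc α)⦄, IsWalk S u v P → IsWalk S u v Q → wval d P = wval d Q →
    ∀ X, wval d (P ++ X) = wval d (Q ++ X)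

theorem appendCompatible_EA (S : Finset (TArc α)) : AppendCompatible .EA S := by
  intro u v P Q _ _ hPQ X
  rcases eq_or_ne X [] with rfl | hX
  · simpa only [List.append_nil] using hPQ
  · simp only [wval, taW_append_of_ne_nil _ hX]

theorem appendCompatible_MT (S : Finset (TArc α)) : AppendCompatible .MT S := by
  intro u v P Q _ _ hPQ X
  simpa [wval] using hPQ

theorem appendCompatible_ST (S : Finset (TArc α)) : AppendCompatible .ST S := by
  intro u v P Q _ _ hPQ X
  simpa [wval, ttW] using hPQ

-- Positive starting times separate the trivial walk, whose starting time is `0` by convention,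
-- from all others; only after the trivial walk does the starting time depend on `X`.
theorem appendCompatible_LD (hS : ∀ a ∈ S, 0 < a.ts) : AppendCompatible .LD S := by
  intro u v P Q hP hQ (hPQ : tsW P = tsW Q) X
  have hnil : P = [] ↔ Q = [] := by
    rw [← hP.tsW_eq_zero_iff hS, ← hQ.tsW_eq_zero_iff hS, hPQ]
  rcases eq_or_ne P [] with hP0 | hP0
  · rw [hP0, hnil.1 hP0]
  · simp only [wval, tsW_append_of_ne_nil hP0, tsW_append_of_ne_nil (hnil.not.1 hP0), hPQ]

theorem Realizes.wval_eq (hP : Realizes d S u v P) (hQ : Realizes d S u v Q) :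
    wval d P = wval d Q := by
  have hPQ := hP.2 Q hQ.1
  have hQP := hQ.2 P hP.1
  split_ifs at hPQ hQP
  · exact hQP.antisymm hPQ
  · exact hPQ.antisymm hQP

theorem Realizes.append_of_append (hd : AppendCompatible d S) (hP : Realizes d S u v P)
    (hQ : Realizes d S u v Q) (hPX : Realizes d S u w (P ++ X))
    (hQX : X ≠ [] → taW Q ≤ tsW X) : Realizes d S u w (Q ++ X) := by
  have hX : IsWalk S v w X := hP.1.endv_eq ▸ (isWalk_append_iff.1 hPX.1).2.1
  have hval : wval d (P ++ X) = wval d (Q ++ X) := hd hP.1 hQ.1 (hP.wval_eq hQ) X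
  exact ⟨hQ.1.append hX hQX, hval ▸ hPX.2⟩

theorem PrefixOptimal.realizes (hL : PrefixOptimal d S u L) : Realizes d S u (endv u L) L := by
  simpa only [List.take_length] using hL L.length le_rfl

theorem prefixOptimal_append_iff :
    PrefixOptimal d S u (P ++ X) ↔
      PrefixOptimal d S u P ∧ ∀ Y, Y <+: X → Realizes d S u (endv u (P ++ Y)) (P ++ Y) := by
  constructor
  · refine fun hPX => ⟨fun k hk => ?_, ?_⟩
    · have := hPX k (by rw [List.length_append]; omega)
      rwa [List.take_append_of_le_length hk] at this
    · rintro Y ⟨Z, rfl⟩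
      have := hPX (P ++ Y).length (by simp only [List.length_append]; omega)
      rwa [← List.append_assoc, List.take_left] at this
  · rintro ⟨hP, hX⟩ k -
    rcases le_total k P.length with hk | hk
    · rw [List.take_append_of_le_length hk]
      exact hP k hk
    · obtain ⟨j, rfl⟩ := Nat.exists_eq_add_of_le hk
      rw [List.take_length_add_append]
      exact hX _ (List.take_prefix j X)

theorem PrefixOptimal.append_of_append (hd : AppendCompatible d S)
    (hPX : PrefixOptimal d S u (P ++ X)) (hQ : PrefixOptimal d S u Q)
    (hend : endv u P = endv u Q) (hQX : X ≠ [] → taW Q ≤ tsW X) :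
    PrefixOptimal d S u (Q ++ X) := by
  obtain ⟨hP, hPY⟩ := prefixOptimal_append_iff.1 hPX
  refine prefixOptimal_append_iff.2 ⟨hQ, fun Y hY => ?_⟩
  have hQY : Y ≠ [] → taW Q ≤ tsW Y := fun hne =>
    tsW_eq_of_prefix hY hne ▸ hQX (hY.ne_nil hne)
  have hPYreal := hPY Y hY
  rw [endv_append, hend, ← endv_append] at hPYreal
  exact Realizes.append_of_append hd (hend ▸ hP.realizes) hQ.realizes hPYreal hQY

end

theorem stmt_7_general (G : TempGraph α) (r u v : α) (d : DistKind)
    (hd : d = DistKind.EA ∨ d = DistKind.MT ∨ d = DistKind.ST ∨ d = DistKind.LD)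
    (W Wv : List (TArc α)) (h : ℕ)
    (hW : IsWalk G.A r u W) (hWpo : PrefixOptimal d G.A r W)
    (hv : endv r (W.take h) = v)
    (hWv : IsWalk G.A r v Wv) (hWvpo : PrefixOptimal d G.A r Wv)
    (hta : W.drop h ≠ [] → taW Wv ≤ tsW (W.drop h)) :
    IsWalk G.A r u (Wv ++ W.drop h) ∧ PrefixOptimal d G.A r (Wv ++ W.drop h) := by
  have hcompat : AppendCompatible d G.A := by
    rcases hd with rfl | rfl | rfl | rfl
    · exact appendCompatible_EA G.A
    · exact appendCompatible_MT G.A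
    · exact appendCompatible_ST G.A
    · exact appendCompatible_LD fun a ha => (G.valid a ha).2.2.2.1
  rw [← W.take_append_drop h] at hW hWpo
  have hsuffix : IsWalk G.A v u (W.drop h) := hv ▸ (isWalk_append_iff.1 hW).2.1
  exact ⟨hWv.append hsuffix hta,
    hWpo.append_of_append hcompat hWvpo (hv.trans hWv.endv_eq.symm) hta⟩

/-- Lemma `claim:subopt`: for `d ∈ {MT, ST, LD}`, if `W` is a
`d`-prefix-optimal temporal `(r,u)`-walk, `v ∈ V(W)`, `S` is a `v`-suffix of `W` (here: the
suffix `W.drop h` where the `h`-prefix of `W` ends at `v`), `W_v` is a `d`-prefix-optimal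
temporal `(r,v)`-walk, and `t_a(W_v) ≤ t_s(S)`, then `W_v + S` is a `d`-prefix-optimal
temporal `(r,u)`-walk. -/
theorem stmt_7 {α : Type u} (G : TempGraph α) (r u v : α) (d : DistKind)
    (hd : d = DistKind.MT ∨ d = DistKind.ST ∨ d = DistKind.LD)
    (W Wv : List (TArc α)) (h : ℕ) (hh : h ≤ W.length)
    (hW : IsWalk G.A r u W) (hWpo : PrefixOptimal d G.A r W)
    (hv : endv r (W.take h) = v)
    (hWv : IsWalk G.A r v Wv) (hWvpo : PrefixOptimal d G.A r Wv)
    (hta : taW Wv ≤ tsW (W.drop h)) :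
    IsWalk G.A r u (Wv ++ W.drop h) ∧ PrefixOptimal d G.A r (Wv ++ W.drop h) :=
  stmt_7_general G r u v d (.inr hd) W Wv h hW hWpo hv hWv hWvpo fun _ => hta
end

section
/- Let φ be a CNF formula with variables x_1,…,x_n and nonempty clauses c_1,…,c_m. Let G=(V,A,2) be the temporal graph with V={x_1,…,x_n}∪{c_1,…,c_m}∪{r} and A consisting of: the arcs (r,x_i,1,1) and (r,x_i,2,2) for every i∈[n]; the arc (x_i,c_j,1,1) for every clause c_j and variable x_i occurring positively in c_j; and the arc (x_i,c_j,2,2) for every clause c_j and variable x_i occurring negatively in c_j. Then, for each d∈{FT,MW}, G has a spanning d-TOB with root r if and only if φ is satisfiable. -/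
open scoped Classical

universe u

variable {α : Type u}

/-- Vertex set of the reduction: variables, clauses and the root. -/
abbrev V13 (n m : ℕ) := Sum (Fin n) (Sum (Fin m) Unit)

/-- The root vertex `r`. -/
def rt13 (n m : ℕ) : V13 n m := Sum.inr (Sum.inr ())

/-- The temporal graph of the reduction of Theorem `thm:FT_tob_hard` (elapsed time 0 case):
arcs `(r,x_i,1,1)`, `(r,x_i,2,2)` for every variable, `(x_i,c_j,1,1)` when `x_i` occurs
positively in `c_j` and `(x_i,c_j,2,2)` when `x_i` occurs negatively in `c_j`. -/
noncomputable def G13 (n m : ℕ) (pos neg : Fin m → Finset (Fin n)) :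
    TempGraph (V13 n m) where
  V := Finset.univ
  A :=
    (Finset.univ.image fun i : Fin n =>
        ((rt13 n m, Sum.inl i, 1, 1) : TArc (V13 n m)))
    ∪ (Finset.univ.image fun i : Fin n =>
        ((rt13 n m, Sum.inl i, 2, 2) : TArc (V13 n m)))
    ∪ (Finset.univ.biUnion fun j : Fin m =>
        ((pos j).image fun i =>
          ((Sum.inl i, Sum.inr (Sum.inl j), 1, 1) : TArc (V13 n m)))
        ∪ ((neg j).image fun i =>
          ((Sum.inl i, Sum.inr (Sum.inl j), 2, 2) : TArc (V13 n m))))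
  τ := 2
  nonempty := ⟨rt13 n m, Finset.mem_univ _⟩
  valid := by
    intro a ha
    simp only [Finset.mem_union, Finset.mem_image, Finset.mem_biUnion, Finset.mem_univ,
      true_and] at ha
    rcases ha with ((⟨i, rfl⟩ | ⟨i, rfl⟩) | ⟨j, (⟨i, -, rfl⟩ | ⟨i, -, rfl⟩)⟩) <;>
      exact ⟨Finset.mem_univ _, Finset.mem_univ _,
        by simp [TArc.tail, TArc.head, rt13],
        by norm_num [TArc.ts], by norm_num [TArc.ts, TArc.ta], by norm_num [TArc.ta]⟩

/-!
Each `x_i` is entered from the root at time `1` (true) or at time `2` (false), and left towards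
`c_j` at the time of the truth value that satisfies `c_j`. No arc takes time, so for both `FT` and
`MW` the value of a walk to `c_j` is the time it spends at `x_i`, and a reachable clause is at
distance `0`. In a temporal out-branching no two arcs have the same head, since one that ends an
earliest-arriving path can replace the others. So a branching commits each `x_i` to one truth
value; it preserves the distances exactly when every `c_j` is reached through some `x_i` committed
to a value that satisfies `c_j`.
-/

section Walks

variable {S T : Finset (TArc α)} {u v w : α} {a b : TArc α} {L : List (TArc α)}

theorem taW_concat (L : List (TArc α)) (a : TArc α) : taW (L ++ [a]) = a.ta := by
  simp [taW]

theorem isWalk_concat_iff :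
    IsWalk S u v (L ++ [a]) ↔ IsWalk S u a.tail L ∧ taW L ≤ a.ts ∧ a ∈ S ∧ a.head = v := by
  induction L generalizing u with
  | nil => simp [IsWalk, taW, eq_comm, and_left_comm]
  | cons b L ih =>
    rw [List.cons_append, IsWalk, IsWalk, ih]
    cases L <;> simp [IsWalk, taW] <;> tauto

theorem IsWalk.transfer (h : IsWalk S u v L) (hT : ∀ a ∈ L, a ∈ S → a ∈ T) :
    IsWalk T u v L := by
  induction L generalizing u with
  | nil => exact h
  | cons a L ih =>
    obtain ⟨ha, htail, htime, hL⟩ := h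
    exact ⟨hT a List.mem_cons_self ha, htail, htime,
      ih hL fun b hb => hT b (List.mem_cons_of_mem a hb)⟩

theorem IsWalk.erase (h : IsWalk S u v L) (hb : b ∉ L) : IsWalk (S.erase b) u v L :=
  h.transfer fun _ ha haS => Finset.mem_erase.2 ⟨fun hab => hb (hab ▸ ha), haS⟩

theorem IsWalk.eq_nil_or_concat (h : IsWalk S u v L) :
    u = v ∧ L = [] ∨
      ∃ P a, L = P ++ [a] ∧ IsWalk S u a.tail P ∧ taW P ≤ a.ts ∧ a ∈ S ∧ a.head = v := by
  rcases List.eq_nil_or_concat' L with rfl | ⟨P, a, rfl⟩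
  · exact .inl ⟨h, rfl⟩
  · exact .inr ⟨P, a, rfl, isWalk_concat_iff.1 h⟩

theorem IsWalk.exists_prefix_of_mem_verts (hS : ∀ a ∈ S, a.ts ≤ a.ta) (h : IsWalk S u w L)
    (hv : v ∈ verts u L) : ∃ P, P <+: L ∧ IsWalk S u v P ∧ taW P ≤ taW L := by
  induction L using List.reverseRecOn generalizing w with
  | nil =>
    obtain rfl : v = u := by simpa [verts] using hv
    exact ⟨[], List.prefix_rfl, rfl, le_rfl⟩
  | append_singleton L a ih =>
    obtain ⟨hL, htime, haS, -⟩ := isWalk_concat_iff.1 h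
    rcases (by simpa [verts, or_assoc] using hv : v ∈ verts u L ∨ v = a.head) with hv | rfl
    · obtain ⟨P, hPL, hP, hle⟩ := ih hL hv
      refine ⟨P, hPL.trans (List.prefix_append L [a]), hP, ?_⟩
      rw [taW_concat]
      exact (hle.trans htime).trans (hS a haS)
    · exact ⟨L ++ [a], List.prefix_rfl, isWalk_concat_iff.2 ⟨hL, htime, haS, rfl⟩, le_rfl⟩

theorem IsWalk.exists_isPathList (hS : ∀ a ∈ S, a.ts ≤ a.ta) (h : IsWalk S u v L) :
    ∃ P, IsPathList u P ∧ IsWalk S u v P ∧ taW P ≤ taW L := by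
  induction L using List.reverseRecOn generalizing v with
  | nil => exact ⟨[], by simp [IsPathList, verts], h, le_rfl⟩
  | append_singleton L a ih =>
    obtain ⟨hL, htime, haS, rfl⟩ := isWalk_concat_iff.1 h
    obtain ⟨P, hPath, hP, hle⟩ := ih hL
    have hPa : IsWalk S u a.head (P ++ [a]) :=
      isWalk_concat_iff.2 ⟨hP, hle.trans htime, haS, rfl⟩
    by_cases hvisited : a.head ∈ verts u P
    · obtain ⟨Q, hQP, hQ, hQle⟩ := hP.exists_prefix_of_mem_verts hS hvisited
      refine ⟨Q, hPath.sublist ((hQP.map _).sublist.cons_cons u), hQ, ?_⟩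
      rw [taW_concat]
      exact ((hQle.trans hle).trans htime).trans (hS a haS)
    · refine ⟨P ++ [a], ?_, hPa, by simp only [taW_concat, le_refl]⟩
      have hverts : verts u (P ++ [a]) = verts u P ++ [a.head] := by simp [verts]
      rw [IsPathList, hverts]
      exact List.concat_eq_append ▸ hPath.concat hvisited

theorem IsWalk.exists_erase_of_detour
    (hb : ∀ P, IsWalk S u b.head (P ++ [b]) →
      ∃ W, IsWalk (S.erase b) u b.head W ∧ taW W ≤ b.ta)
    (h : IsWalk S u v L) : ∃ W, IsWalk (S.erase b) u v W ∧ taW W ≤ taW L := by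
  induction L using List.reverseRecOn generalizing v with
  | nil => exact ⟨[], h, le_rfl⟩
  | append_singleton L a ih =>
    obtain ⟨hL, htime, haS, rfl⟩ := isWalk_concat_iff.1 h
    simp only [taW_concat]
    by_cases hab : a = b
    · subst hab
      exact hb L h
    · obtain ⟨W, hW, hle⟩ := ih hL
      exact ⟨W ++ [a], isWalk_concat_iff.2
        ⟨hW, hle.trans htime, Finset.mem_erase.2 ⟨hab, haS⟩, rfl⟩, (taW_concat W a).le⟩

end Walks

section OutBranchings

variable {G B : TempGraph α} {S : Finset (TArc α)} {r : α} {b : TArc α} {d : DistKind}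

theorem IsTOB.exists_isWalk_concat_forall_erase_lt (hB : IsTOB B r) (hb : b ∈ B.A) :
    ∃ P, IsWalk B.A r b.head (P ++ [b]) ∧
      ∀ W, IsWalk (B.A.erase b) r b.head W → b.ta < taW W := by
  by_contra! hdetour
  refine hB.2.2 _ (Finset.erase_ssubset hb) fun v hv => ?_
  obtain ⟨L, hL⟩ := hB.2.1 v hv
  obtain ⟨W, hW, -⟩ := hL.exists_erase_of_detour hdetour
  exact ⟨W, hW⟩

theorem IsTOB.head_ne_root (hB : IsTOB B r) (hb : b ∈ B.A) : b.head ≠ r := by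
  obtain ⟨-, -, hlate⟩ := hB.exists_isWalk_concat_forall_erase_lt hb
  rintro rfl
  exact Nat.not_lt_zero _ (hlate [] rfl)

theorem IsTOB.injOn_head (hB : IsTOB B r) : Set.InjOn TArc.head (B.A : Set (TArc α)) := by
  intro a ha b hb hab
  wlog hle : a.ta ≤ b.ta generalizing a b
  · exact (this hb ha hab.symm (le_of_not_ge hle)).symm
  obtain ⟨P, hP, hlate_a⟩ := hB.exists_isWalk_concat_forall_erase_lt ha
  obtain ⟨-, -, hlate_b⟩ := hB.exists_isWalk_concat_forall_erase_lt hb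
  obtain ⟨L, hPath, hL, htime⟩ :=
    hP.exists_isPathList fun c hc => (B.valid c hc).2.2.2.2.1
  rw [taW_concat] at htime
  -- `L` visits the common head once, yet it arrives too early to avoid either arc.
  have haL : a ∈ L := by
    by_contra haL
    exact (hlate_a L (hL.erase haL)).not_ge htime
  have hbL : b ∈ L := by
    by_contra hbL
    exact (hlate_b L (hab ▸ hL.erase hbL)).not_ge (htime.trans hle)
  exact List.inj_on_of_nodup_map hPath.of_cons haL hbL hab

theorem isTOB_iff : IsTOB B r ↔ r ∈ B.V ∧ ReachAll B.A B.V r ∧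
    Set.InjOn TArc.head (B.A : Set (TArc α)) ∧ ∀ a ∈ B.A, a.head ≠ r := by
  refine ⟨fun hB => ⟨hB.1, hB.2.1, hB.injOn_head, fun _ => hB.head_ne_root⟩, ?_⟩
  rintro ⟨hr, hreach, hinj, hroot⟩
  refine ⟨hr, hreach, fun S hS hSreach => ?_⟩
  obtain ⟨a, ha, haS⟩ := Finset.exists_of_ssubset hS
  obtain ⟨L, hL⟩ := hSreach a.head (B.valid a ha).2.1
  obtain ⟨hra, -⟩ | ⟨-, b, -, -, -, hbS, hba⟩ := hL.eq_nil_or_concat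
  · exact absurd hra.symm (hroot a ha)
  exact haS (hinj (hS.1 hbS) ha hba ▸ hbS)

theorem distVal_eq_zero_iff (hd : d ≠ DistKind.LD) (G : TempGraph α) (u v : α) :
    distVal d G u v = 0 ↔ ∃ L, IsWalk G.A u v L ∧ wval d L = 0 := by
  rw [distVal, if_neg hd, ENat.sInf_eq_zero]
  simp [eq_comm]

/-- The spanning temporal subgraph of `G` with arc set `S`. -/
def TempGraph.withArcs (G : TempGraph α) (S : Finset (TArc α)) (hS : S ⊆ G.A) :
    TempGraph α where
  V := G.V
  A := S
  τ := G.τ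
  nonempty := G.nonempty
  valid a ha := G.valid a (hS ha)

theorem isSpanningDTOB_withArcs (hd : d ≠ DistKind.LD) (hS : S ⊆ G.A) (hr : r ∈ G.V)
    (hinj : Set.InjOn TArc.head (S : Set (TArc α))) (hroot : ∀ a ∈ S, a.head ≠ r)
    (hzero : ∀ v ∈ G.V, ∃ L, IsWalk S r v L ∧ wval d L = 0) :
    IsSpanningDTOB d G (G.withArcs S hS) r := by
  have hreach : ReachAll S G.V r := fun v hv => (hzero v hv).imp fun _ => And.left
  refine ⟨⟨isTOB_iff.2 ⟨hr, hreach, hinj, hroot⟩, ⟨subset_rfl, hS, le_rfl⟩, fun v hv => ?_⟩, rfl⟩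
  obtain ⟨L, hL, hval⟩ := hzero v hv
  rw [(distVal_eq_zero_iff hd (G.withArcs S hS) r v).2 ⟨L, hL, hval⟩,
    (distVal_eq_zero_iff hd G r v).2 ⟨L, hL.transfer fun _ _ ha => hS ha, hval⟩]

end OutBranchings

section WalkValues

variable {d : DistKind} {a b : TArc α}

theorem ne_LD_of_eq_FT_or_eq_MW (hd : d = DistKind.FT ∨ d = DistKind.MW) : d ≠ DistKind.LD := by
  rcases hd with rfl | rfl <;> decide

theorem wval_nil (d : DistKind) : wval d ([] : List (TArc α)) = 0 := by
  cases d <;> rfl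

theorem wval_singleton (hd : d = DistKind.FT ∨ d = DistKind.MW) (ha : a.ts = a.ta) :
    wval d [a] = 0 := by
  rcases hd with rfl | rfl <;> simp [wval, durW, waitW, taW, tsW, ha]

theorem wval_pair (hd : d = DistKind.FT ∨ d = DistKind.MW) (ha : a.ts = a.ta)
    (hb : b.ts = b.ta) : wval d [a, b] = b.ts - a.ta := by
  rcases hd with rfl | rfl <;> simp [wval, durW, waitW, taW, tsW, ha, hb]

end WalkValues

namespace G13

variable {n m : ℕ} {pos neg : Fin m → Finset (Fin n)} {i : Fin n} {j : Fin m} {p : Bool}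
  {S : Finset (TArc (V13 n m))} {L : List (TArc (V13 n m))} {d : DistKind}

/-- The vertex `x_i`. -/
abbrev varVertex (m : ℕ) (i : Fin n) : V13 n m := Sum.inl i

/-- The vertex `c_j`. -/
abbrev clauseVertex (n : ℕ) (j : Fin m) : V13 n m := Sum.inr (Sum.inl j)

/-- The time at which the reduction encodes a truth value. -/
def truthTime (p : Bool) : ℕ := if p then 1 else 2

/-- The arc from the root to `x_i` that stands for assigning `x_i` the value `p`. -/
def rootArc (m : ℕ) (i : Fin n) (p : Bool) : TArc (V13 n m) :=
  (rt13 n m, varVertex m i, truthTime p, truthTime p)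

/-- The arc from `x_i` to `c_j` that stands for `c_j` being satisfied by giving `x_i` the value
`p`. -/
def clauseArc (i : Fin n) (j : Fin m) (p : Bool) : TArc (V13 n m) :=
  (varVertex m i, clauseVertex n j, truthTime p, truthTime p)

/-- The variables whose literal with truth value `p` occurs in the clause `c_j`. -/
def literals (pos neg : Fin m → Finset (Fin n)) (j : Fin m) (p : Bool) : Finset (Fin n) :=
  if p then pos j else neg j

theorem satisfiable_iff :
    Satisfiable n m pos neg ↔ ∃ σ : Fin n → Bool, ∀ j, ∃ i, i ∈ literals pos neg j (σ i) := by
  refine exists_congr fun σ => forall_congr' fun j => ?_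
  rw [← exists_or]
  refine exists_congr fun i => ?_
  cases h : σ i <;> simp [literals]

theorem truthTime_injective : Function.Injective truthTime := by
  decide

theorem mem_A_iff {a : TArc (V13 n m)} :
    a ∈ (G13 n m pos neg).A ↔
      (∃ i p, a = rootArc m i p) ∨ ∃ i j p, i ∈ literals pos neg j p ∧ a = clauseArc i j p := by
  simp only [G13, Finset.mem_union, Finset.mem_image, Finset.mem_biUnion, Finset.mem_univ,
    true_and]
  constructor
  · rintro ((⟨i, rfl⟩ | ⟨i, rfl⟩) | ⟨j, ⟨i, hi, rfl⟩ | ⟨i, hi, rfl⟩⟩)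
    · exact .inl ⟨i, true, rfl⟩
    · exact .inl ⟨i, false, rfl⟩
    · exact .inr ⟨i, j, true, hi, rfl⟩
    · exact .inr ⟨i, j, false, hi, rfl⟩
  · rintro (⟨i, _ | _, rfl⟩ | ⟨i, j, _ | _, hi, rfl⟩)
    · exact .inl (.inr ⟨i, rfl⟩)
    · exact .inl (.inl ⟨i, rfl⟩)
    · exact .inr ⟨j, .inr ⟨i, hi, rfl⟩⟩
    · exact .inr ⟨j, .inl ⟨i, hi, rfl⟩⟩

theorem rootArc_mem_A (i : Fin n) (p : Bool) : rootArc m i p ∈ (G13 n m pos neg).A :=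
  mem_A_iff.2 (.inl ⟨i, p, rfl⟩)

theorem clauseArc_mem_A_iff :
    clauseArc i j p ∈ (G13 n m pos neg).A ↔ i ∈ literals pos neg j p := by
  cases p <;> simp [mem_A_iff, rootArc, clauseArc, rt13, truthTime_injective.eq_iff]

theorem head_ne_root {a : TArc (V13 n m)} (ha : a ∈ (G13 n m pos neg).A) :
    a.head ≠ rt13 n m := by
  rcases mem_A_iff.1 ha with ⟨i, p, rfl⟩ | ⟨i, j, p, -, rfl⟩ <;>
    simp [TArc.head, rootArc, clauseArc, rt13]

theorem eq_rootArc_of_head_eq {a : TArc (V13 n m)} (ha : a ∈ (G13 n m pos neg).A)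
    (hi : a.head = varVertex m i) : ∃ p, a = rootArc m i p := by
  rcases mem_A_iff.1 ha with ⟨i, p, rfl⟩ | ⟨i, j, p, -, rfl⟩
  · obtain rfl := Sum.inl.inj hi
    exact ⟨p, rfl⟩
  · simp [TArc.head, clauseArc] at hi

theorem eq_clauseArc_of_head_eq {a : TArc (V13 n m)} (ha : a ∈ (G13 n m pos neg).A)
    (hj : a.head = clauseVertex n j) : ∃ i p, a = clauseArc i j p := by
  rcases mem_A_iff.1 ha with ⟨i, p, rfl⟩ | ⟨i, j, p, -, rfl⟩
  · simp [TArc.head, rootArc] at hj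
  · obtain rfl := Sum.inl.inj (Sum.inr.inj hj)
    exact ⟨i, p, rfl⟩

theorem isWalk_rootArc (hp : rootArc m i p ∈ S) :
    IsWalk S (rt13 n m) (varVertex m i) [rootArc m i p] :=
  ⟨hp, rfl, by simp, rfl⟩

theorem isWalk_rootArc_clauseArc (hroot : rootArc m i p ∈ S) (hclause : clauseArc i j p ∈ S) :
    IsWalk S (rt13 n m) (clauseVertex n j) [rootArc m i p, clauseArc i j p] :=
  ⟨hroot, rfl, by simp [rootArc, clauseArc, TArc.ta, TArc.ts], hclause, rfl, by simp, rfl⟩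

theorem eq_pair_of_isWalk_clauseVertex (hS : S ⊆ (G13 n m pos neg).A)
    (h : IsWalk S (rt13 n m) (clauseVertex n j) L) :
    ∃ i p q, rootArc m i p ∈ S ∧ clauseArc i j q ∈ S ∧ truthTime p ≤ truthTime q ∧
      L = [rootArc m i p, clauseArc i j q] := by
  obtain ⟨hroot, -⟩ | ⟨P, b, rfl, hP, htime, hbS, hb⟩ := h.eq_nil_or_concat
  · simp [rt13] at hroot
  obtain ⟨i, q, rfl⟩ := eq_clauseArc_of_head_eq (hS hbS) hb
  obtain ⟨hroot, -⟩ | ⟨Q, a, rfl, hQ, -, haS, ha⟩ := hP.eq_nil_or_concat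
  · simp [rt13, TArc.tail, clauseArc] at hroot
  obtain ⟨p, rfl⟩ := eq_rootArc_of_head_eq (hS haS) ha
  obtain ⟨-, rfl⟩ | ⟨-, c, -, -, -, hcS, hc⟩ := hQ.eq_nil_or_concat
  · exact ⟨i, p, q, haS, hbS, htime, rfl⟩
  · exact absurd hc (head_ne_root (hS hcS))

theorem exists_isWalk_clauseVertex_wval_eq_zero_iff (hd : d = DistKind.FT ∨ d = DistKind.MW)
    (hS : S ⊆ (G13 n m pos neg).A) :
    (∃ L, IsWalk S (rt13 n m) (clauseVertex n j) L ∧ wval d L = 0) ↔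
      ∃ i p, rootArc m i p ∈ S ∧ clauseArc i j p ∈ S := by
  constructor
  · rintro ⟨L, hL, hval⟩
    obtain ⟨i, p, q, hroot, hclause, htime, rfl⟩ := eq_pair_of_isWalk_clauseVertex hS hL
    rw [wval_pair hd rfl rfl] at hval
    have htime' : truthTime q ≤ truthTime p := Nat.sub_eq_zero_iff_le.1 hval
    obtain rfl : p = q := truthTime_injective (htime.antisymm htime')
    exact ⟨i, p, hroot, hclause⟩
  · rintro ⟨i, p, hroot, hclause⟩
    refine ⟨_, isWalk_rootArc_clauseArc hroot hclause, ?_⟩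
    rw [wval_pair hd rfl rfl]
    exact Nat.sub_self (truthTime p)

theorem distVal_clauseVertex_eq_zero (hd : d = DistKind.FT ∨ d = DistKind.MW)
    (h : IsWalk (G13 n m pos neg).A (rt13 n m) (clauseVertex n j) L) :
    distVal d (G13 n m pos neg) (rt13 n m) (clauseVertex n j) = 0 := by
  obtain ⟨i, -, q, -, hclause, -⟩ := eq_pair_of_isWalk_clauseVertex subset_rfl h
  rw [distVal_eq_zero_iff (ne_LD_of_eq_FT_or_eq_MW hd),
    exists_isWalk_clauseVertex_wval_eq_zero_iff hd subset_rfl]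
  exact ⟨i, q, rootArc_mem_A i q, hclause⟩

theorem satisfiable_of_isSpanningDTOB (hd : d = DistKind.FT ∨ d = DistKind.MW)
    {B : TempGraph (V13 n m)} (hB : IsSpanningDTOB d (G13 n m pos neg) B (rt13 n m)) :
    Satisfiable n m pos neg := by
  obtain ⟨⟨hTOB, ⟨-, hsub, -⟩, hdist⟩, hV⟩ := hB
  let σ : Fin n → Bool := fun i => decide (rootArc m i true ∈ B.A)
  have hσ : ∀ i p, rootArc m i p ∈ B.A → σ i = p := by
    rintro i (_ | _) hp
    · refine decide_eq_false fun htrue => ?_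
      have harc : rootArc m i true = rootArc m i false := hTOB.injOn_head htrue hp rfl
      have htime : truthTime true = truthTime false := congrArg TArc.ts harc
      exact Bool.noConfusion (truthTime_injective htime)
    · exact decide_eq_true hp
  refine satisfiable_iff.2 ⟨σ, fun j => ?_⟩
  have hj : clauseVertex n j ∈ B.V := hV ▸ Finset.mem_univ _
  obtain ⟨L, hL⟩ := hTOB.2.1 _ hj
  have hzero := hdist _ hj
  rw [distVal_clauseVertex_eq_zero hd (hL.transfer fun _ _ ha => hsub ha),
    distVal_eq_zero_iff (ne_LD_of_eq_FT_or_eq_MW hd),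
    exists_isWalk_clauseVertex_wval_eq_zero_iff hd hsub] at hzero
  obtain ⟨i, p, hroot, hclause⟩ := hzero
  exact ⟨i, (hσ i p hroot).symm ▸ clauseArc_mem_A_iff.1 (hsub hclause)⟩

/-- The arcs of the branching that assigns to each `x_i` the value `σ i` and enters each `c_j`
from `x_{w j}`, the variable chosen to satisfy it. -/
noncomputable def branchingArcs (σ : Fin n → Bool) (w : Fin m → Fin n) :
    Finset (TArc (V13 n m)) :=
  (Finset.univ.image fun i => rootArc m i (σ i)) ∪
    Finset.univ.image fun j => clauseArc (w j) j (σ (w j))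

section Branching

variable {σ : Fin n → Bool} {w : Fin m → Fin n}

theorem mem_branchingArcs {a : TArc (V13 n m)} :
    a ∈ branchingArcs σ w ↔
      (∃ i, rootArc m i (σ i) = a) ∨ ∃ j, clauseArc (w j) j (σ (w j)) = a := by
  simp [branchingArcs]

theorem branchingArcs_subset (hw : ∀ j, w j ∈ literals pos neg j (σ (w j))) :
    branchingArcs σ w ⊆ (G13 n m pos neg).A := by
  intro a ha
  rcases mem_branchingArcs.1 ha with ⟨i, rfl⟩ | ⟨j, rfl⟩
  · exact rootArc_mem_A i (σ i)
  · exact clauseArc_mem_A_iff.2 (hw j)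

theorem injOn_head_branchingArcs :
    Set.InjOn TArc.head (branchingArcs σ w : Set (TArc (V13 n m))) := by
  intro a ha b hb hab
  rcases mem_branchingArcs.1 ha with ⟨i, rfl⟩ | ⟨j, rfl⟩ <;>
    rcases mem_branchingArcs.1 hb with ⟨i', rfl⟩ | ⟨j', rfl⟩ <;>
    simp only [TArc.head, rootArc, clauseArc, Sum.inl.injEq, Sum.inr.injEq, reduceCtorEq] at hab <;>
    subst hab <;> rfl

theorem exists_isWalk_branchingArcs_wval_eq_zero (hd : d = DistKind.FT ∨ d = DistKind.MW)
    (hw : ∀ j, w j ∈ literals pos neg j (σ (w j))) (v : V13 n m) :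
    ∃ L, IsWalk (branchingArcs σ w) (rt13 n m) v L ∧ wval d L = 0 := by
  have hroot : ∀ i, rootArc m i (σ i) ∈ branchingArcs σ w :=
    fun i => mem_branchingArcs.2 (.inl ⟨i, rfl⟩)
  have hclause : ∀ j, clauseArc (w j) j (σ (w j)) ∈ branchingArcs σ w :=
    fun j => mem_branchingArcs.2 (.inr ⟨j, rfl⟩)
  rcases v with i | j | ⟨⟩
  · exact ⟨_, isWalk_rootArc (hroot i), wval_singleton hd rfl⟩
  · exact (exists_isWalk_clauseVertex_wval_eq_zero_iff hd (branchingArcs_subset hw)).2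
      ⟨w j, σ (w j), hroot (w j), hclause j⟩
  · exact ⟨[], rfl, wval_nil d⟩

end Branching

theorem exists_isSpanningDTOB_of_satisfiable (hd : d = DistKind.FT ∨ d = DistKind.MW)
    (hsat : Satisfiable n m pos neg) :
    ∃ B : TempGraph (V13 n m), IsSpanningDTOB d (G13 n m pos neg) B (rt13 n m) := by
  obtain ⟨σ, hσ⟩ := satisfiable_iff.1 hsat
  choose w hw using hσ
  have hsub := branchingArcs_subset hw
  exact ⟨(G13 n m pos neg).withArcs (branchingArcs σ w) hsub,
    isSpanningDTOB_withArcs (ne_LD_of_eq_FT_or_eq_MW hd) hsub (Finset.mem_univ _)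
      injOn_head_branchingArcs (fun _ ha => head_ne_root (hsub ha))
      fun v _ => exists_isWalk_branchingArcs_wval_eq_zero hd hw v⟩

end G13

/-- Theorem `thm:FT_tob_hard`, elapsed time 0, `τ = 2`: for
`d ∈ {FT, MW}`, the reduction graph has a spanning `d`-TOB with root `r` iff the CNF formula
is satisfiable. -/
theorem stmt_13 (n m : ℕ) (pos neg : Fin m → Finset (Fin n))
    (hne : ∀ j, (pos j ∪ neg j).Nonempty)
    (d : DistKind) (hd : d = DistKind.FT ∨ d = DistKind.MW) :
    (∃ B : TempGraph (V13 n m), IsSpanningDTOB d (G13 n m pos neg) B (rt13 n m)) ↔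
      Satisfiable n m pos neg := by
  constructor
  · rintro ⟨B, hB⟩
    exact G13.satisfiable_of_isSpanningDTOB hd hB
  · exact G13.exists_isSpanningDTOB_of_satisfiable hd
end
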